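/- Let L be a finite-dimensional Leibniz algebra over a field F that is minimally non-triangulable, i.e. every proper subalgebra of L is triangulable on L but L itself is not triangulable on itself. Then L is two-generated and L/φ(L) is a simple Leibniz algebra. -/

import Mathlib

/-!
Basic theory of (left) Leibniz algebras, formalized over an arbitrary field `F`.
A Leibniz algebra structure on an `F`-vector space `L` is given by a bilinear
multiplication `m : L →ₗ[F] L →ₗ[F] L` satisfying the left Leibniz identity.
-/

open Submodule Module

section LeibnizDefs

variable {F : Type*} [Field F] {L : Type*} [AddCommGroup L] [Module F L]
variable (m : L →ₗ[F] L →ₗ[F] L)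

/-- The left Leibniz identity: `a(bc) = (ab)c + b(ac)`. -/
def IsLeibniz : Prop :=
  ∀ a b c : L, m a (m b c) = m (m a b) c + m b (m a c)

/-- The multiplication is antisymmetric, i.e. the algebra is a Lie algebra. -/
def IsLie : Prop := ∀ a b : L, m a b = - m b a

/-- The product of two subspaces: the span of all products `x·y`, `x ∈ P`, `y ∈ Q`. -/
abbrev mprod (P Q : Submodule F L) : Submodule F L := Submodule.map₂ m P Q

/-- A subalgebra: a subspace closed under multiplication. -/
def IsSubalg (S : Submodule F L) : Prop := ∀ x ∈ S, ∀ y ∈ S, m x y ∈ S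

/-- An ideal of `L`: a subspace `I` with `L·I ⊆ I` and `I·L ⊆ I`. -/
def IsIdeal (I : Submodule F L) : Prop :=
  ∀ (x : L), ∀ y ∈ I, m x y ∈ I ∧ m y x ∈ I

/-- An ideal `I` of a subalgebra `S`. -/
def IsIdealOf (S I : Submodule F L) : Prop :=
  I ≤ S ∧ ∀ x ∈ S, ∀ y ∈ I, m x y ∈ I ∧ m y x ∈ I

/-- A minimal ideal: a nonzero ideal containing no nonzero proper subideal of `L`. -/
def IsMinIdeal (A : Submodule F L) : Prop :=
  IsIdeal m A ∧ A ≠ ⊥ ∧ ∀ J, IsIdeal m J → J ≤ A → J = ⊥ ∨ J = A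

/-- The derived series of a subspace: `S^(0) = S`, `S^(n+1) = S^(n)·S^(n)`. -/
def derSeries (S : Submodule F L) : ℕ → Submodule F L
  | 0 => S
  | n + 1 => mprod m (derSeries S n) (derSeries S n)

/-- A subalgebra is solvable if its derived series reaches `0`. -/
def IsSolvableSub (S : Submodule F L) : Prop := ∃ n, derSeries m S n = ⊥

/-- The Leibniz algebra `L` is solvable. -/
abbrev IsSolvableAlg : Prop := IsSolvableSub m (⊤ : Submodule F L)

/-- The lower central series of a subspace: `N^1 = N`, `N^(k+1) = N·N^k`. -/
def lcSeries (N : Submodule F L) : ℕ → Submodule F L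
  | 0 => N
  | k + 1 => mprod m N (lcSeries N k)

/-- A subalgebra is nilpotent if its lower central series reaches `0`. -/
def IsNilpotentSub (N : Submodule F L) : Prop := ∃ k, lcSeries m N k = ⊥

/-- A subalgebra `S` is strongly solvable if `S² = S·S` is nilpotent. -/
def IsStronglySolvable (S : Submodule F L) : Prop :=
  IsNilpotentSub m (mprod m S S)

/-- A maximal subalgebra: a proper subalgebra not contained in any larger proper
subalgebra. -/
def IsMaxSubalg (S : Submodule F L) : Prop :=
  IsSubalg m S ∧ S ≠ ⊤ ∧ ∀ T, IsSubalg m T → S ≤ T → T = S ∨ T = ⊤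

/-- The Frattini subalgebra `F(L)`: the intersection of all maximal subalgebras. -/
def frattiniSub : Submodule F L := sInf {S | IsMaxSubalg m S}

/-- The Frattini ideal `φ(L)`: the largest ideal contained in the Frattini
subalgebra. -/
def frattiniIdeal : Submodule F L :=
  sSup {I | IsIdeal m I ∧ I ≤ frattiniSub m}

/-- `Leib(L)`: the span of all squares `x·x`. -/
def leibIdeal : Submodule F L := Submodule.span F {z | ∃ x : L, z = m x x}

/-- The subalgebra generated by a set. -/
def genBy (s : Set L) : Submodule F L := sInf {S | IsSubalg m S ∧ s ⊆ S}

/-- A subalgebra is two-generated if it is generated as an algebra by two elements. -/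
def TwoGenerated (S : Submodule F L) : Prop := ∃ x y : L, genBy m {x, y} = S

/-- A subalgebra `S` is supersolvable if there is a chain of ideals of `S`,
`0 = S₀ ⊂ S₁ ⊂ ⋯ ⊂ Sₙ = S`, with `dim Sᵢ = i`. -/
def IsSupersolvable (S : Submodule F L) : Prop :=
  ∃ (n : ℕ) (c : ℕ → Submodule F L), c 0 = ⊥ ∧ c n = S ∧
    (∀ i, i < n → c i ≤ c (i + 1)) ∧
    (∀ i, i ≤ n → IsIdealOf m S (c i)) ∧
    (∀ i, i ≤ n → Module.finrank F (c i) = i)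

/-- A subspace `S` is nil on `L` if left multiplication by each of its elements is a
nilpotent operator. -/
def IsNilOn (S : Submodule F L) : Prop :=
  ∀ x ∈ S, IsNilpotent (m x : Module.End F L)

open scoped TensorProduct in
/-- A subspace `S` is triangulable on `L` if, after extending scalars to the algebraic
closure `K` of `F`, the space `K ⊗ L` admits a basis with respect to which the left
multiplication operators by all elements of `K ⊗ S` are upper triangular matrices.
(Since upper triangular matrices form a `K`-subspace of matrices, it suffices that the
base-changed left multiplication by each `x ∈ S` is upper triangular.) -/
def IsTriangulableOn (S : Submodule F L) : Prop :=
  ∃ (n : ℕ) (b : Basis (Fin n) (AlgebraicClosure F) ((AlgebraicClosure F) ⊗[F] L)),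
    ∀ x ∈ S, ∀ i j : Fin n, j < i →
      LinearMap.toMatrix b b (LinearMap.baseChange (AlgebraicClosure F) (m x)) i j = 0

end LeibnizDefs

/-!
By Jacobson's theorem on weakly closed sets, together with a common eigenvector argument over the
algebraic closure, a subalgebra `S` is triangulable on `L` if and only if left multiplication by
every product `xy` with `x, y ∈ S` is nilpotent. A failure is therefore witnessed by two elements,
and in a minimally non-triangulable algebra these generate `L`.

If `J` is a nil ideal and `M` is a maximal subalgebra not containing `J`, then `L = M + J` and
triangulability of `M` would pass to `L`, so nil ideals lie in the Frattini subalgebra. If `I` is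
any proper ideal, then `I²` is a nil ideal, and for `a ∈ I` the Fitting one component of left
multiplication by `a` lies in `I²`. The Fitting null component is a subalgebra, so it is all of `L`
and `I` is nil. Hence every proper ideal lies in `φ(L)`.
-/

section LieSets

/-- A Lie set in the sense of Jacobson: a set, not necessarily a subspace, closed under the
bracket. -/
def IsLieSet {L : Type*} [Bracket L L] (S : Set L) : Prop :=
  ∀ x ∈ S, ∀ y ∈ S, ⁅x, y⁆ ∈ S

section NilpotentAction

variable {R L M : Type*} [CommRing R] [LieRing L] [LieAlgebra R L] [AddCommGroup M] [Module R M]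
  [LieRingModule L M] [LieModule R L M]

lemma lieModule_isNilpotent_of_le {K K' : LieSubalgebra R L} (hle : K ≤ K')
    [LieModule.IsNilpotent K' M] : LieModule.IsNilpotent K M :=
  Function.Injective.lieModuleIsNilpotent (f := LieSubalgebra.inclusion hle)
    (g := (LinearMap.id : M →ₗ[R] M)) (fun _ _ => rfl) Function.injective_id

lemma lieModule_isNilpotent_of_toSubmodule_eq_sup {K K' : LieSubalgebra R L} {x : L}
    (hx : x ∈ K.normalizer) (hxM : IsNilpotent (LieModule.toEnd R L M x))
    (hK' : K'.toSubmodule = (R ∙ x) ⊔ K.toSubmodule) [LieModule.IsNilpotent K M] :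
    LieModule.IsNilpotent K' M := by
  have hle : K ≤ K' := by
    rw [← LieSubalgebra.toSubmodule_le_toSubmodule, hK']
    exact le_sup_right
  have hxK' : x ∈ K' := by
    rw [← LieSubalgebra.mem_toSubmodule, hK']
    exact mem_sup_left (mem_span_singleton_self x)
  have hnorm : K' ≤ K.normalizer := by
    rw [← LieSubalgebra.toSubmodule_le_toSubmodule, hK']
    exact sup_le ((span_singleton_le_iff_mem _ _).mpr hx) K.le_normalizer
  obtain ⟨I, hI⟩ : ∃ I : LieIdeal R K', ∀ y, y ∈ I ↔ (y : L) ∈ K :=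
    ⟨{ K.toSubmodule.comap K'.toSubmodule.subtype with
        lie_mem := fun {y z} hz => (K.mem_normalizer_iff y).mp (hnorm y.2) z hz },
      fun _ => Iff.rfl⟩
  have hspan : R ∙ (⟨x, hxK'⟩ : K') ⊔ LieSubmodule.toSubmodule I = ⊤ := by
    rw [eq_top_iff]
    rintro ⟨y, hy⟩ -
    rw [← LieSubalgebra.mem_toSubmodule, hK', mem_sup] at hy
    obtain ⟨_, hz, k, hk, rfl⟩ := hy
    obtain ⟨r, rfl⟩ := mem_span_singleton.mp hz
    have hkI : (⟨k, hle hk⟩ : K') ∈ I := (hI _).mpr hk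
    exact mem_sup.mpr ⟨r • ⟨x, hxK'⟩, smul_mem _ r (mem_span_singleton_self _), _, hkI,
      Subtype.ext rfl⟩
  let incl : I →ₗ⁅R⁆ K :=
    { toFun := fun y => ⟨y, (hI y).mp y.2⟩
      map_add' := fun _ _ => rfl
      map_smul' := fun _ _ => rfl
      map_lie' := rfl }
  have hIM : LieModule.IsNilpotent I M :=
    Function.Injective.lieModuleIsNilpotent (f := incl) (g := (LinearMap.id : M →ₗ[R] M))
      (fun _ _ => rfl) Function.injective_id
  exact LieSubmodule.isNilpotentOfIsNilpotentSpanSupEqTop hspan hxM hIM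

lemma mem_normalizer_lieSpan {T : Set L} {x : L}
    (hx : ∀ t ∈ T, ⁅x, t⁆ ∈ LieSubalgebra.lieSpan R L T) :
    x ∈ (LieSubalgebra.lieSpan R L T).normalizer := by
  rw [LieSubalgebra.mem_normalizer_iff]
  intro y hy
  induction hy using LieSubalgebra.lieSpan_induction with
  | mem t ht => exact hx t ht
  | zero => simp
  | add y z _ _ hy hz => simpa only [lie_add] using add_mem hy hz
  | smul r y _ hy => simpa only [lie_smul] using LieSubalgebra.smul_mem _ r hy
  | lie y z hy' hz' hy hz =>
    rw [leibniz_lie]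
    exact add_mem (LieSubalgebra.lie_mem _ hy hz') (LieSubalgebra.lie_mem _ hy' hz)

/-- If `S ⊄ K`, commutators of an element of `S \ K` with elements of `S ∩ K` descend along the
lower central series of `K` acting on `L`, so some such commutator is the last one outside `K`. -/
lemma IsLieSet.exists_lie_mem_of_not_subset {S : Set L} (hS : IsLieSet S) (K : LieSubalgebra R L)
    (hK : LieModule.IsNilpotent K L) (hSK : ¬ S ⊆ K) :
    ∃ s ∈ S, s ∉ K ∧ ∀ t ∈ S ∩ K, ⁅s, t⁆ ∈ K := by
  by_contra! hcon
  have descend (k : ℕ) : ∃ s ∈ S, s ∉ K ∧ s ∈ LieModule.lowerCentralSeries R K L k := by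
    induction k with
    | zero =>
      obtain ⟨s, hs, hsK⟩ := Set.not_subset.mp hSK
      exact ⟨s, hs, hsK, by simp⟩
    | succ k ih =>
      obtain ⟨s, hs, hsK, hsk⟩ := ih
      obtain ⟨t, ⟨htS, htK⟩, ht⟩ := hcon s hs hsK
      refine ⟨⁅s, t⁆, hS s hs t htS, ht, ?_⟩
      rw [← lie_skew, neg_mem_iff, LieModule.lowerCentralSeries_succ]
      exact LieSubmodule.lie_mem_lie (x := (⟨t, htK⟩ : K)) (LieSubmodule.mem_top _) hsk
  obtain ⟨k, hk⟩ := (LieModule.isNilpotent_iff R K L).mp hK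
  obtain ⟨s, -, hsK, hsk⟩ := descend k
  rw [hk, LieSubmodule.mem_bot] at hsk
  exact hsK (hsk ▸ K.zero_mem)

end NilpotentAction

section Jacobson

attribute [local instance] LieRing.ofAssociativeRing

variable {R M : Type*} [CommRing R] [AddCommGroup M] [Module R M] [IsNoetherian R M]

lemma lieModule_isNilpotent_end (K : LieSubalgebra R (Module.End R M))
    (hK : LieModule.IsNilpotent K M) : LieModule.IsNilpotent K (Module.End R M) := by
  rw [LieModule.isNilpotent_iff_forall' (R := R)]
  intro x
  have hx : IsNilpotent (x : Module.End R M) := LieModule.isNilpotent_toEnd_of_isNilpotent R K M x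
  exact LieAlgebra.ad_nilpotent_of_nilpotent (R := R) hx

variable {S : Set (Module.End R M)}

lemma IsLieSet.exists_lieSpan_lt (hS : IsLieSet S) (hnil : ∀ f ∈ S, IsNilpotent f)
    {T : Set (Module.End R M)} (hTS : T ⊆ S)
    (hT : LieModule.IsNilpotent (LieSubalgebra.lieSpan R (Module.End R M) T) M)
    (hST : ¬ S ⊆ LieSubalgebra.lieSpan R (Module.End R M) T) :
    ∃ T' ⊆ S, LieModule.IsNilpotent (LieSubalgebra.lieSpan R (Module.End R M) T') M ∧
      LieSubalgebra.lieSpan R (Module.End R M) T < LieSubalgebra.lieSpan R (Module.End R M) T' := by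
  set K := LieSubalgebra.lieSpan R (Module.End R M) T
  have hspan : LieSubalgebra.lieSpan R (Module.End R M) (S ∩ K) = K :=
    le_antisymm (LieSubalgebra.lieSpan_le.mpr Set.inter_subset_right)
      (LieSubalgebra.lieSpan_mono (Set.subset_inter hTS LieSubalgebra.subset_lieSpan))
  obtain ⟨s, hs, hsK, hsnorm⟩ :=
    hS.exists_lie_mem_of_not_subset K (lieModule_isNilpotent_end K hT) hST
  have hsnorm' : s ∈ K.normalizer := by
    have := mem_normalizer_lieSpan (R := R) (T := S ∩ K) fun t ht => hspan ▸ hsnorm t ht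
    rwa [hspan] at this
  let K' : LieSubalgebra R (Module.End R M) :=
    { (R ∙ s) ⊔ K.toSubmodule with
      lie_mem' := LieSubalgebra.lie_mem_sup_of_mem_normalizer hsnorm' }
  have hK' : LieModule.IsNilpotent K' M :=
    lieModule_isNilpotent_of_toSubmodule_eq_sup hsnorm' (hnil s hs) rfl
  have hle : LieSubalgebra.lieSpan R (Module.End R M) (insert s T) ≤ K' :=
    LieSubalgebra.lieSpan_le.mpr
      (Set.insert_subset (mem_sup_left (mem_span_singleton_self s))
        fun t ht => mem_sup_right (LieSubalgebra.subset_lieSpan ht))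
  refine ⟨insert s T, Set.insert_subset hs hTS, ?_, ?_⟩
  · exact lieModule_isNilpotent_of_le hle
  · refine lt_of_le_of_ne (LieSubalgebra.lieSpan_mono (Set.subset_insert s T)) fun h => hsK ?_
    exact h ▸ LieSubalgebra.subset_lieSpan (Set.mem_insert s T)

theorem IsLieSet.isNilpotent_lieSpan (hS : IsLieSet S) (hnil : ∀ f ∈ S, IsNilpotent f) :
    LieModule.IsNilpotent (LieSubalgebra.lieSpan R (Module.End R M) S) M := by
  let P : LieSubalgebra R (Module.End R M) → Prop := fun K =>
    ∃ T ⊆ S, LieSubalgebra.lieSpan R _ T = K ∧ LieModule.IsNilpotent K M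
  have hbot : P ⊥ := by
    refine ⟨∅, Set.empty_subset S, LieSubalgebra.span_empty R _, ?_⟩
    rw [LieModule.isNilpotent_iff_forall' (R := R)]
    rintro ⟨x, hx⟩
    simp [(LieSubalgebra.mem_bot x).mp hx]
  obtain ⟨K, ⟨T, hTS, rfl, hT⟩, hmax⟩ := exists_maximal_of_wellFoundedGT P ⟨⊥, hbot⟩
  have hST : S ⊆ LieSubalgebra.lieSpan R _ T := by
    by_contra hST
    obtain ⟨T', hT'S, hT', hlt⟩ := hS.exists_lieSpan_lt hnil hTS hT hST
    exact hlt.not_ge (hmax ⟨T', hT'S, rfl, hT'⟩ hlt.le)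
  rwa [le_antisymm (LieSubalgebra.lieSpan_le.mpr hST) (LieSubalgebra.lieSpan_mono hTS)]

lemma IsLieSet.isNilpotent_of_mem_span (hS : IsLieSet S) (hnil : ∀ f ∈ S, IsNilpotent f)
    {f : Module.End R M} (hf : f ∈ Submodule.span R S) : IsNilpotent f := by
  have := hS.isNilpotent_lieSpan hnil
  exact LieModule.isNilpotent_toEnd_of_isNilpotent R _ M
    (⟨f, LieSubalgebra.submodule_span_le_lieSpan hf⟩ : LieSubalgebra.lieSpan R _ S)

end Jacobson

end LieSets

section Triangularization

attribute [local instance] LieRing.ofAssociativeRing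

section CommonEigenvector

lemma IsLieSet.exists_ne_zero_forall_apply_eq_zero {R M : Type*} [CommRing R] [AddCommGroup M]
    [Module R M] [IsNoetherian R M] [Nontrivial M] {S : Set (Module.End R M)} (hS : IsLieSet S)
    (hnil : ∀ f ∈ S, IsNilpotent f) : ∃ v : M, v ≠ 0 ∧ ∀ f ∈ S, f v = 0 := by
  have := hS.isNilpotent_lieSpan hnil
  have := LieModule.nontrivial_max_triv_of_isNilpotent R (LieSubalgebra.lieSpan R _ S) M
  obtain ⟨⟨v, hv⟩, hv0⟩ :=
    exists_ne (0 : LieModule.maxTrivSubmodule R (LieSubalgebra.lieSpan R _ S) M)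
  exact ⟨v, fun h => hv0 (Subtype.ext h), fun f hf => hv ⟨f, LieSubalgebra.subset_lieSpan hf⟩⟩

variable {K V ι : Type*} [Field K] [IsAlgClosed K] [AddCommGroup V] [Module K V]
  [FiniteDimensional K V] {f : ι → Module.End K V}

lemma exists_common_eigenvector_of_commute [Nontrivial V] (hf : ∀ i j, Commute (f i) (f j)) :
    ∃ v : V, v ≠ 0 ∧ ∀ i, ∃ c : K, f i v = c • v := by
  have : IsLieAbelian (LieSubalgebra.lieSpan K (Module.End K V) (Set.range f)) := by
    rw [LieSubalgebra.isLieAbelian_lieSpan_iff]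
    rintro _ ⟨i, rfl⟩ _ ⟨j, rfl⟩
    exact (hf i j).lie_eq
  obtain ⟨χ, hχ⟩ := LieModule.exists_nontrivial_weightSpace_of_isNilpotent K
    (LieSubalgebra.lieSpan K (Module.End K V) (Set.range f)) V
  obtain ⟨⟨v, hv⟩, hv0⟩ := exists_ne (0 : LieModule.weightSpace V χ)
  rw [LieModule.mem_weightSpace] at hv
  exact ⟨v, fun h => hv0 (Subtype.ext h),
    fun i => ⟨_, hv ⟨f i, LieSubalgebra.subset_lieSpan (Set.mem_range_self i)⟩⟩⟩

/-- The common kernel of the commutators is nonzero by Engel's theorem and invariant under the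
family, which commutes on it. -/
lemma exists_common_eigenvector_of_isNilpotent_lie [Nontrivial V] (hS : IsLieSet (Set.range f))
    (hnil : ∀ i j, IsNilpotent ⁅f i, f j⁆) :
    ∃ v : V, v ≠ 0 ∧ ∀ i, ∃ c : K, f i v = c • v := by
  have hlie (i j : ι) : ∃ k, f k = ⁅f i, f j⁆ := hS _ ⟨i, rfl⟩ _ ⟨j, rfl⟩
  let W : Submodule K V := ⨅ (i : ι) (j : ι), LinearMap.ker ⁅f i, f j⁆
  have hW (v : V) : v ∈ W ↔ ∀ i j, ⁅f i, f j⁆ v = 0 := by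
    simp only [W, mem_iInf, LinearMap.mem_ker]
  have hD : IsLieSet {g | ∃ i j, ⁅f i, f j⁆ = g} := by
    rintro _ ⟨i, j, rfl⟩ _ ⟨k, l, rfl⟩
    obtain ⟨p, hp⟩ := hlie i j
    obtain ⟨q, hq⟩ := hlie k l
    exact ⟨p, q, by rw [hp, hq]⟩
  obtain ⟨w, hw0, hw⟩ := hD.exists_ne_zero_forall_apply_eq_zero
    (by rintro _ ⟨i, j, rfl⟩; exact hnil i j)
  have : Nontrivial W :=
    nontrivial_of_ne ⟨w, (hW w).mpr fun i j => hw _ ⟨i, j, rfl⟩⟩ 0 fun h =>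
      hw0 (congrArg Subtype.val h)
  have hinv (k : ι) : ∀ v ∈ W, f k v ∈ W := by
    intro v hv
    rw [hW] at hv ⊢
    intro i j
    obtain ⟨l, hl⟩ := hlie i j
    calc ⁅f i, f j⁆ (f k v) = ⁅f l, f k⁆ v + f k (⁅f i, f j⁆ v) := by
          rw [← hl, LieRing.of_associative_ring_bracket, LinearMap.sub_apply]
          exact (sub_add_cancel _ _).symm
      _ = 0 := by rw [hv, hv, map_zero, add_zero]
  obtain ⟨v, hv0, hv⟩ := exists_common_eigenvector_of_commute
    (f := fun i => (f i).restrict (hinv i)) fun i j => by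
      rw [commute_iff_lie_eq]
      ext v
      exact (hW v).mp v.2 i j
  refine ⟨v, fun h => hv0 (Subtype.ext h), fun i => ?_⟩
  obtain ⟨c, hc⟩ := hv i
  exact ⟨c, congrArg Subtype.val hc⟩

end CommonEigenvector

variable {K V ι : Type*} [Field K] [AddCommGroup V] [Module K V]

lemma exists_basis_isUpperTriangular_of_quotient {v : V} (hv : v ≠ 0) {n : ℕ}
    (bQ : Basis (Fin n) K (V ⧸ K ∙ v)) :
    ∃ b : Basis (Fin (n + 1)) K V, ∀ (f : Module.End K V) (hf : K ∙ v ≤ (K ∙ v).comap f),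
      (LinearMap.toMatrix bQ bQ ((K ∙ v).mapQ (K ∙ v) f hf)).IsUpperTriangular →
        (LinearMap.toMatrix b b f).IsUpperTriangular := by
  let bW : Basis (Fin 1) K (K ∙ v) := finBasisOfFinrankEq K _ (finrank_span_singleton hv)
  let e : Fin 1 ⊕ Fin n ≃ Fin (n + 1) := finSumFinEquiv.trans (finCongr (add_comm 1 n))
  have he_inl (i : Fin 1) : (e (Sum.inl i) : ℕ) = 0 := by simp [e]
  have he_inr (i : Fin n) : (e (Sum.inr i) : ℕ) = 1 + i := by simp [e, add_comm]
  refine ⟨(bW.sumQuot bQ).reindex e, fun f hf hQ i j hij => ?_⟩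
  obtain ⟨i, rfl⟩ := e.surjective i
  obtain ⟨j, rfl⟩ := e.surjective j
  rw [id, id, Fin.lt_def] at hij
  rw [LinearMap.toMatrix_apply, Basis.repr_reindex_apply, Basis.reindex_apply,
    Equiv.symm_apply_apply, Equiv.symm_apply_apply]
  rcases i with i | i
  · rw [he_inl] at hij
    omega
  rw [Basis.sumQuot_repr_inr]
  rcases j with j | j
  · have hfW : (K ∙ v).mkQ (f (bW j)) = 0 := (Quotient.mk_eq_zero _).mpr (hf (bW j).2)
    rw [Basis.sumQuot_inl, hfW, map_zero, Finsupp.zero_apply]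
  · rw [he_inr, he_inr] at hij
    have hji : j < i := by omega
    have hentry := hQ hji
    rwa [LinearMap.toMatrix_apply, ← Basis.sumQuot_inr bW bQ j] at hentry

theorem exists_basis_isUpperTriangular_of_isNilpotent_lie [IsAlgClosed K] [FiniteDimensional K V]
    {f : ι → Module.End K V} (hS : IsLieSet (Set.range f)) (hnil : ∀ i j, IsNilpotent ⁅f i, f j⁆) :
    ∃ b : Basis (Fin (finrank K V)) K V,
      ∀ i, (LinearMap.toMatrix b b (f i)).IsUpperTriangular := by
  induction h : finrank K V generalizing V with
  | zero => exact ⟨finBasisOfFinrankEq K V h, fun _ i => i.elim0⟩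
  | succ n ih =>
    have : Nontrivial V := nontrivial_of_finrank_pos (R := K) (by omega)
    obtain ⟨v, hv0, hv⟩ := exists_common_eigenvector_of_isNilpotent_lie hS hnil
    have hinv (i : ι) : K ∙ v ≤ (K ∙ v).comap (f i) := by
      obtain ⟨c, hc⟩ := hv i
      exact (span_singleton_le_iff_mem _ _).mpr (mem_span_singleton.mpr ⟨c, hc.symm⟩)
    let fQ (i : ι) : Module.End K (V ⧸ K ∙ v) := (K ∙ v).mapQ (K ∙ v) (f i) (hinv i)
    have hlie {i j k : ι} (hk : f k = ⁅f i, f j⁆) : fQ k = ⁅fQ i, fQ j⁆ :=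
      linearMap_qext _ (by ext x; simp [fQ, hk, LieRing.of_associative_ring_bracket])
    obtain ⟨bQ, hbQ⟩ := ih (f := fQ)
      (by
        rintro _ ⟨i, rfl⟩ _ ⟨j, rfl⟩
        obtain ⟨k, hk⟩ := hS _ ⟨i, rfl⟩ _ ⟨j, rfl⟩
        exact ⟨k, hlie hk⟩)
      (fun i j => by
        obtain ⟨k, hk⟩ := hS _ ⟨i, rfl⟩ _ ⟨j, rfl⟩
        rw [← hlie hk]
        exact Module.End.IsNilpotent.mapQ _ (hk ▸ hnil i j))
      (by rw [finrank_quotient, finrank_span_singleton hv0, h, Nat.add_sub_cancel])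
    obtain ⟨b, hb⟩ := exists_basis_isUpperTriangular_of_quotient hv0 bQ
    exact ⟨b, fun i => hb (f i) (hinv i) (hbQ i)⟩

section UpperTriangular

variable {R n : Type*} [CommRing R] [Fintype n] [LinearOrder n] {A B : Matrix n n R}

lemma mul_apply_diag_of_isUpperTriangular (hA : A.IsUpperTriangular) (hB : B.IsUpperTriangular)
    (i : n) : (A * B) i i = A i i * B i i := by
  rw [Matrix.mul_apply]
  refine Finset.sum_eq_single_of_mem i (Finset.mem_univ i) fun k _ hki => ?_
  rcases hki.lt_or_gt with hlt | hgt
  · rw [hA hlt, zero_mul]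
  · rw [hB hgt, mul_zero]

lemma isNilpotent_lie_of_isUpperTriangular (hA : A.IsUpperTriangular) (hB : B.IsUpperTriangular) :
    IsNilpotent ⁅A, B⁆ := by
  rw [LieRing.of_associative_ring_bracket]
  have htri : (A * B - B * A).IsUpperTriangular := (hA.mul hB).sub (hB.mul hA)
  have hdiag (i : n) : (A * B - B * A) i i = 0 := by
    rw [Matrix.sub_apply, mul_apply_diag_of_isUpperTriangular hA hB,
      mul_apply_diag_of_isUpperTriangular hB hA, mul_comm, sub_self]
  have hchar : (A * B - B * A).charpoly = Polynomial.X ^ Fintype.card n := by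
    simp [Matrix.charpoly_of_isUpperTriangular _ htri, hdiag]
  exact ⟨Fintype.card n, by simpa [hchar] using Matrix.aeval_self_charpoly (A * B - B * A)⟩

end UpperTriangular

end Triangularization

section Leibniz

variable {F : Type*} [Field F] {L : Type*} [AddCommGroup L] [Module F L]
  {m : L →ₗ[F] L →ₗ[F] L} {S I J : Submodule F L}

section LeftMultiplication

attribute [local instance] LieRing.ofAssociativeRing

lemma IsLeibniz.leftMul_mul (hm : IsLeibniz m) (a b : L) : m (m a b) = ⁅m a, m b⁆ := by
  ext c
  exact eq_sub_of_add_eq (hm a b c).symm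

lemma IsTriangulableOn.isNilpotent_leftMul_mul (hS : IsTriangulableOn m S) (hm : IsLeibniz m)
    {x y : L} (hx : x ∈ S) (hy : y ∈ S) : IsNilpotent (m (m x y)) := by
  obtain ⟨n, b, hb⟩ := hS
  have hnil := isNilpotent_lie_of_isUpperTriangular (fun i j => hb x hx i j)
    (fun i j => hb y hy i j)
  rw [LieRing.of_associative_ring_bracket, ← LinearMap.toMatrix_mul, ← LinearMap.toMatrix_mul,
    ← map_sub, LinearMap.isNilpotent_toMatrix_iff, ← LinearMap.baseChange_mul,
    ← LinearMap.baseChange_mul, ← LinearMap.baseChange_sub] at hnil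
  rw [hm.leftMul_mul]
  exact (IsNilpotent.map_iff (f := Module.End.baseChangeHom F (AlgebraicClosure F) L)
    (LinearMap.baseChangeHom_injective F L (AlgebraicClosure F))).mp hnil

open scoped TensorProduct in
theorem IsSubalg.isTriangulableOn_of_isNilpotent [FiniteDimensional F L] (hS : IsSubalg m S)
    (hm : IsLeibniz m) (hnil : ∀ x ∈ S, ∀ y ∈ S, IsNilpotent (m (m x y))) :
    IsTriangulableOn m S := by
  let f (x : S) : Module.End (AlgebraicClosure F) (AlgebraicClosure F ⊗[F] L) :=
    (m x).baseChange (AlgebraicClosure F)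
  have hlie (x y : S) : ⁅f x, f y⁆ = (m (m x y)).baseChange (AlgebraicClosure F) := by
    rw [hm.leftMul_mul, LieRing.of_associative_ring_bracket, LieRing.of_associative_ring_bracket,
      LinearMap.baseChange_sub, LinearMap.baseChange_mul, LinearMap.baseChange_mul]
  obtain ⟨b, hb⟩ := exists_basis_isUpperTriangular_of_isNilpotent_lie (f := f)
    (by
      rintro _ ⟨x, rfl⟩ _ ⟨y, rfl⟩
      exact ⟨⟨m x y, hS x x.2 y y.2⟩, (hlie x y).symm⟩)
    (fun x y => by
      rw [hlie]
      exact (hnil x x.2 y y.2).map (Module.End.baseChangeHom F (AlgebraicClosure F) L))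
  exact ⟨_, b, fun x hx i j hij => hb ⟨x, hx⟩ hij⟩

lemma IsTriangulableOn.isNilOn_mprod [FiniteDimensional F L] (hS : IsTriangulableOn m S)
    (hsub : IsSubalg m S) (hm : IsLeibniz m) : IsNilOn m (mprod m S S) := by
  intro z hz
  rw [mprod, map₂_eq_span_image2] at hz
  refine IsLieSet.isNilpotent_of_mem_span (S := m '' Set.image2 (fun x y => m x y) S S) ?_ ?_
    (apply_mem_span_image_of_mem_span m hz)
  · rintro _ ⟨_, ⟨x, hx, y, hy, rfl⟩, rfl⟩ _ ⟨_, ⟨z, hz, w, hw, rfl⟩, rfl⟩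
    exact ⟨_, ⟨m x y, hsub x hx y hy, m z w, hsub z hz w hw, rfl⟩, hm.leftMul_mul _ _⟩
  · rintro _ ⟨_, ⟨x, hx, y, hy, rfl⟩, rfl⟩
    exact hS.isNilpotent_leftMul_mul hm hx hy

/-- The set `{m c} ∪ m(J)` is closed under commutators because `J` is an ideal. -/
lemma IsNilOn.isNilpotent_leftMul_add [FiniteDimensional F L] (hJ : IsNilOn m J)
    (hideal : IsIdeal m J) (hm : IsLeibniz m) {c z : L} (hc : IsNilpotent (m c)) (hz : z ∈ J) :
    IsNilpotent (m (c + z)) := by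
  have hS : IsLieSet (insert (m c) (m '' J)) := by
    rintro _ (rfl | ⟨x, hx, rfl⟩) _ (rfl | ⟨y, hy, rfl⟩)
    · exact .inr ⟨0, J.zero_mem, by rw [map_zero, lie_self]⟩
    · exact .inr ⟨m c y, (hideal c y hy).1, hm.leftMul_mul c y⟩
    · exact .inr ⟨m x c, (hideal c x hx).2, hm.leftMul_mul x c⟩
    · exact .inr ⟨m x y, (hideal x y hy).1, hm.leftMul_mul x y⟩
  refine hS.isNilpotent_of_mem_span ?_ ?_ (f := m (c + z))
  · rintro _ (rfl | ⟨x, hx, rfl⟩)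
    exacts [hc, hJ x hx]
  · rw [map_add]
    exact add_mem (subset_span (.inl rfl)) (subset_span (.inr ⟨z, hz, rfl⟩))

/-- Left multiplications are derivations, so `m x` lies in the Fitting null component of
`ad (m a)` whenever `x` lies in that of `m a`. -/
lemma IsLeibniz.isSubalg_maxGenEigenspace_zero (hm : IsLeibniz m) (a : L) :
    IsSubalg m (Module.End.maxGenEigenspace (m a) 0) := by
  intro x hx y hy
  have hpow (k : ℕ) : (LieAlgebra.ad F (Module.End F L) (m a) ^ k) (m x) = m ((m a ^ k) x) := by
    induction k with
    | zero => rfl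
    | succ k ih =>
      rw [pow_succ', pow_succ', Module.End.mul_apply, Module.End.mul_apply, ih,
        LieAlgebra.ad_apply, hm.leftMul_mul]
  have hadx : m x ∈ (LieAlgebra.ad F (Module.End F L) (m a)).maxGenEigenspace 0 := by
    simp only [Module.End.mem_maxGenEigenspace, zero_smul, sub_zero] at hx ⊢
    obtain ⟨k, hk⟩ := hx
    exact ⟨k, by rw [hpow, hk, map_zero]⟩
  simpa using LieModule.lie_mem_maxGenEigenspace_toEnd (L := Module.End F L) (M := L) hadx hy

end LeftMultiplication

section Ideals

lemma IsIdeal.isSubalg (hI : IsIdeal m I) : IsSubalg m I := fun x _ y hy => (hI x y hy).1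

lemma IsIdeal.mprod_self (hI : IsIdeal m I) (hm : IsLeibniz m) : IsIdeal m (mprod m I I) := by
  refine fun x y hy => ⟨?_, ?_⟩
  · suffices mprod m I I ≤ (mprod m I I).comap (m x) from this hy
    refine map₂_le.mpr fun b hb c hc => ?_
    rw [mem_comap, hm x b c]
    exact add_mem (apply_mem_map₂ m (hI x b hb).1 hc) (apply_mem_map₂ m hb (hI x c hc).1)
  · suffices mprod m I I ≤ (mprod m I I).comap (m.flip x) from this hy
    refine map₂_le.mpr fun b hb c hc => ?_
    rw [mem_comap, LinearMap.flip_apply, eq_sub_of_add_eq (hm b c x).symm]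
    exact sub_mem (apply_mem_map₂ m hb (hI x c hc).2) (apply_mem_map₂ m hc (hI x b hb).2)

lemma IsIdeal.range_leftMul_pow_le (hI : IsIdeal m I) (hm : IsLeibniz m) {a : L} (ha : a ∈ I)
    (k : ℕ) : LinearMap.range ((m a : Module.End F L) ^ (k + 2)) ≤ mprod m I I := by
  rintro _ ⟨v, rfl⟩
  induction k with
  | zero =>
    rw [zero_add, pow_two, Module.End.mul_apply]
    exact apply_mem_map₂ m ha (hI v a ha).2
  | succ k ih =>
    rw [add_right_comm, pow_succ', Module.End.mul_apply]
    exact (hI.mprod_self hm a _ ih).1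

lemma IsIdeal.exists_add_mul_add_eq (hJ : IsIdeal m J) {u u' z z' : L} (hz : z ∈ J)
    (hz' : z' ∈ J) : ∃ w ∈ J, m (u + z) (u' + z') = m u u' + w := by
  refine ⟨m (u + z) z' + m z u', add_mem (hJ _ _ hz').1 (hJ _ _ hz).2, ?_⟩
  simp only [map_add, LinearMap.add_apply]
  abel

lemma IsSubalg.sup_isIdeal (hS : IsSubalg m S) (hJ : IsIdeal m J) : IsSubalg m (S ⊔ J) := by
  intro x hx y hy
  obtain ⟨u, hu, z, hz, rfl⟩ := mem_sup.mp hx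
  obtain ⟨u', hu', z', hz', rfl⟩ := mem_sup.mp hy
  obtain ⟨w, hw, hmul⟩ := hJ.exists_add_mul_add_eq (u := u) (u' := u') hz hz'
  exact hmul ▸ add_mem_sup (hS u hu u' hu') hw

lemma isIdeal_sSup {s : Set (Submodule F L)} (hs : ∀ I ∈ s, IsIdeal m I) :
    IsIdeal m (sSup s) := by
  refine fun x y hy => ⟨?_, ?_⟩
  · suffices sSup s ≤ (sSup s).comap (m x) from this hy
    exact sSup_le fun I hI z hz => le_sSup hI (hs I hI x z hz).1
  · suffices sSup s ≤ (sSup s).comap (m.flip x) from this hy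
    exact sSup_le fun I hI z hz => le_sSup hI (hs I hI x z hz).2

end Ideals

lemma isSubalg_sInf {s : Set (Submodule F L)} (hs : ∀ S ∈ s, IsSubalg m S) :
    IsSubalg m (sInf s) := by
  intro x hx y hy
  rw [mem_sInf] at hx hy ⊢
  exact fun S hS => hs S hS x (hx S hS) y (hy S hS)

variable (m) in
lemma isSubalg_bot : IsSubalg m ⊥ := by
  intro x _ y hy
  rw [(mem_bot F).mp hy, map_zero]
  exact zero_mem _

variable (m) in
lemma isSubalg_genBy (s : Set L) : IsSubalg m (genBy m s) :=
  isSubalg_sInf fun _ hS => hS.1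

variable (m) in
lemma subset_genBy (s : Set L) : s ⊆ genBy m s := by
  intro x hx
  exact mem_sInf.mpr fun S hS => hS.2 hx

section Frattini

lemma IsSubalg.exists_le_isMaxSubalg [FiniteDimensional F L] (hS : IsSubalg m S) (hne : S ≠ ⊤) :
    ∃ M, S ≤ M ∧ IsMaxSubalg m M := by
  obtain ⟨M, hSM, ⟨hM, hMtop⟩, hmax⟩ :=
    exists_maximal_ge_of_wellFoundedGT (fun T => IsSubalg m T ∧ T ≠ ⊤) S ⟨hS, hne⟩
  refine ⟨M, hSM, hM, hMtop, fun T hT hMT => ?_⟩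
  by_contra! hT'
  exact hT'.1 (le_antisymm (hmax ⟨hT, hT'.2⟩ hMT) hMT)

lemma IsSubalg.eq_top_of_sup_frattiniSub_eq_top [FiniteDimensional F L] (hS : IsSubalg m S)
    (hsup : S ⊔ frattiniSub m = ⊤) : S = ⊤ := by
  by_contra hne
  obtain ⟨M, hSM, hM⟩ := hS.exists_le_isMaxSubalg hne
  exact hM.2.1 (top_le_iff.mp (hsup ▸ sup_le hSM (sInf_le hM)))

variable (m) in
lemma isIdeal_frattiniIdeal : IsIdeal m (frattiniIdeal m) :=
  isIdeal_sSup fun _ hI => hI.1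

variable (m) in
lemma frattiniIdeal_le_frattiniSub : frattiniIdeal m ≤ frattiniSub m :=
  sSup_le fun _ hI => hI.2

lemma frattiniIdeal_ne_top [FiniteDimensional F L] [Nontrivial L] : frattiniIdeal m ≠ ⊤ := by
  intro h
  have hsub : frattiniSub m = ⊤ := top_le_iff.mp (h ▸ frattiniIdeal_le_frattiniSub m)
  exact bot_ne_top ((isSubalg_bot m).eq_top_of_sup_frattiniSub_eq_top (by rw [hsub, sup_top_eq]))

lemma IsIdeal.le_frattiniIdeal (hI : IsIdeal m I) (hle : I ≤ frattiniSub m) :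
    I ≤ frattiniIdeal m :=
  le_sSup ⟨hI, hle⟩

end Frattini

end Leibniz

section MinimallyNonTriangulable

variable {F : Type*} [Field F] {L : Type*} [AddCommGroup L] [Module F L]
  {m : L →ₗ[F] L →ₗ[F] L}

/-- `L` is minimally non-triangulable: every proper subalgebra is triangulable on `L`, but `L` is
not triangulable on itself. -/
structure IsMinimallyNonTriangulable (m : L →ₗ[F] L →ₗ[F] L) : Prop where
  isTriangulableOn : ∀ S : Submodule F L, IsSubalg m S → S ≠ ⊤ → IsTriangulableOn m S
  not_isTriangulableOn_top : ¬ IsTriangulableOn m (⊤ : Submodule F L)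

namespace IsMinimallyNonTriangulable

variable [FiniteDimensional F L] (h : IsMinimallyNonTriangulable m) (hm : IsLeibniz m)
  {I J : Submodule F L}

include h hm

lemma exists_not_isNilpotent_leftMul_mul : ∃ x y, ¬ IsNilpotent (m (m x y)) := by
  by_contra! hnil
  exact h.not_isTriangulableOn_top
    (IsSubalg.isTriangulableOn_of_isNilpotent (fun _ _ _ _ => mem_top) hm
      fun x _ y _ => hnil x y)

lemma nontrivial : Nontrivial L := by
  obtain ⟨x, y, hxy⟩ := h.exists_not_isNilpotent_leftMul_mul hm
  exact nontrivial_of_ne (m x y) 0 fun h0 => hxy (by rw [h0, map_zero]; exact .zero)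

theorem exists_genBy_pair_eq_top : ∃ x y, genBy m {x, y} = ⊤ := by
  obtain ⟨x, y, hxy⟩ := h.exists_not_isNilpotent_leftMul_mul hm
  refine ⟨x, y, by_contra fun hne => hxy ?_⟩
  exact (h.isTriangulableOn _ (isSubalg_genBy m {x, y}) hne).isNilpotent_leftMul_mul hm
    (subset_genBy m _ (Set.mem_insert x {y})) (subset_genBy m _ (Set.mem_insert_of_mem x rfl))

/-- If a maximal subalgebra `M` misses `J`, then `L = M + J` and every product in `L` is a product
in `M` up to an element of the nil ideal `J`. -/
theorem le_frattiniSub_of_isNilOn (hJ : IsIdeal m J) (hnil : IsNilOn m J) :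
    J ≤ frattiniSub m := by
  refine le_sInf fun M ⟨hM, hMtop, hmax⟩ => ?_
  by_contra hJM
  have hsup : M ⊔ J = ⊤ := (hmax _ (hM.sup_isIdeal hJ) le_sup_left).resolve_left fun hMJ =>
    hJM (hMJ ▸ le_sup_right)
  obtain ⟨x, y, hxy⟩ := h.exists_not_isNilpotent_leftMul_mul hm
  obtain ⟨u, hu, z, hz, rfl⟩ := mem_sup.mp (hsup ▸ mem_top : x ∈ M ⊔ J)
  obtain ⟨u', hu', z', hz', rfl⟩ := mem_sup.mp (hsup ▸ mem_top : y ∈ M ⊔ J)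
  obtain ⟨w, hw, hmul⟩ := hJ.exists_add_mul_add_eq (u := u) (u' := u') hz hz'
  rw [hmul] at hxy
  exact hxy (hnil.isNilpotent_leftMul_add hJ hm
    ((h.isTriangulableOn M hM hMtop).isNilpotent_leftMul_mul hm hu hu') hw)

theorem mprod_self_le_frattiniSub (hI : IsIdeal m I) (hne : I ≠ ⊤) :
    mprod m I I ≤ frattiniSub m :=
  h.le_frattiniSub_of_isNilOn hm (hI.mprod_self hm)
    ((h.isTriangulableOn I hI.isSubalg hne).isNilOn_mprod hI.isSubalg hm)

/-- For `a ∈ I` the Fitting one component of `m a` lies in `I²`, hence in the Frattini subalgebra,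
so the null component, a subalgebra, is all of `L`. -/
theorem isNilOn_of_ne_top (hI : IsIdeal m I) (hne : I ≠ ⊤) : IsNilOn m I := by
  intro a ha
  obtain ⟨n, hfit, hn⟩ := ((LinearMap.eventually_isCompl_ker_pow_range_pow (m a)).and
    (Filter.eventually_ge_atTop 2)).exists
  obtain ⟨k, rfl⟩ := Nat.exists_eq_add_of_le' hn
  have hker : LinearMap.ker (m a ^ (k + 2)) ≤ Module.End.maxGenEigenspace (m a) 0 := by
    intro v hv
    rw [Module.End.mem_maxGenEigenspace]
    exact ⟨k + 2, by rwa [zero_smul, sub_zero]⟩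
  have hrange : LinearMap.range (m a ^ (k + 2)) ≤ frattiniSub m :=
    (hI.range_leftMul_pow_le hm ha k).trans (h.mprod_self_le_frattiniSub hm hI hne)
  have htop : Module.End.maxGenEigenspace (m a) 0 = ⊤ :=
    (hm.isSubalg_maxGenEigenspace_zero a).eq_top_of_sup_frattiniSub_eq_top
      (top_le_iff.mp (hfit.sup_eq_top ▸ sup_le_sup hker hrange))
  refine Module.End.isNilpotent_iff_of_finite.mpr fun v => ?_
  simpa only [Module.End.mem_maxGenEigenspace, zero_smul, sub_zero] using
    (htop ▸ mem_top : v ∈ Module.End.maxGenEigenspace (m a) 0)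

theorem not_mprod_top_le_frattiniIdeal : ¬ mprod m ⊤ ⊤ ≤ frattiniIdeal m := by
  intro hle
  have := h.nontrivial hm
  obtain ⟨x, y, hxy⟩ := h.exists_not_isNilpotent_leftMul_mul hm
  exact hxy (h.isNilOn_of_ne_top hm (isIdeal_frattiniIdeal m) frattiniIdeal_ne_top _
    (hle (apply_mem_map₂ m mem_top mem_top)))

theorem le_frattiniIdeal_of_ne_top (hI : IsIdeal m I) (hne : I ≠ ⊤) : I ≤ frattiniIdeal m :=
  hI.le_frattiniIdeal (h.le_frattiniSub_of_isNilOn hm hI (h.isNilOn_of_ne_top hm hI hne))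

end IsMinimallyNonTriangulable

end MinimallyNonTriangulable

/-- Let `L` be a finite-dimensional Leibniz algebra that is minimally
non-triangulable: every proper subalgebra of `L` is triangulable on `L`, but `L` itself
is not triangulable on itself. Then `L` is two-generated and `L/φ(L)` is a simple
Leibniz algebra. Simplicity of the quotient `L/φ(L)` is expressed via the lattice
correspondence: the quotient is nonzero (`φ(L) ≠ ⊤`), its multiplication is nonzero
(`L·L ⊄ φ(L)`), and it has no proper nonzero ideals (every ideal of `L` containing
`φ(L)` equals `φ(L)` or `L`). -/
theorem minimally_non_triangulable_two_generated_and_simple_quotient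
    {F : Type*} [Field F] {L : Type*} [AddCommGroup L] [Module F L]
    [FiniteDimensional F L]
    (m : L →ₗ[F] L →ₗ[F] L) (hm : IsLeibniz m)
    (hproper : ∀ S : Submodule F L, IsSubalg m S → S ≠ ⊤ → IsTriangulableOn m S)
    (hnot : ¬ IsTriangulableOn m (⊤ : Submodule F L)) :
    (∃ x y : L, genBy m {x, y} = ⊤) ∧
    frattiniIdeal m ≠ ⊤ ∧
    ¬ (mprod m ⊤ ⊤ ≤ frattiniIdeal m) ∧
    (∀ I : Submodule F L, IsIdeal m I → frattiniIdeal m ≤ I →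
      I = frattiniIdeal m ∨ I = ⊤) := by
  have h : IsMinimallyNonTriangulable m := ⟨hproper, hnot⟩
  have := h.nontrivial hm
  refine ⟨h.exists_genBy_pair_eq_top hm, frattiniIdeal_ne_top,
    h.not_mprod_top_le_frattiniIdeal hm, fun I hI hle => or_iff_not_imp_right.mpr fun hne => ?_⟩
  exact le_antisymm (h.le_frattiniIdeal_of_ne_top hm hI hne) hle
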